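/- Let d be a positive natural number and let G be a subgroup of the group of invertible d×d real matrices such that the corresponding set of matrices { (g : Matrix (Fin d) (Fin d) ℝ) | g ∈ G } is compact. Then there exist a positive natural number n, weights p : Fin n → ℝ with p i ≥ 0 for all i and Σ_i p i = 1 and p 0 > 0, and elements g : Fin n → G with g 0 = 1, such that the matrix T := Σ_i p i • (g i : Matrix (Fin d) (Fin d) ℝ) satisfies (u : Matrix (Fin d) (Fin d) ℝ) * T = T for every u ∈ G. -/

import Mathlib

/-!
Average the inclusion of the compact group `G` over its Haar probability measure. Left invariance of
the measure makes the mean `T` satisfy `u * T = T`, and `T` lies in the closed convex hull of `G`,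
which in finite dimension is the convex hull itself. Carathéodory's theorem then gives
`T = ∑ i, p i • g i` with all `p i` positive, and replacing each `g i` by `(g 0)⁻¹ * g i` puts the
identity first while leaving the sum unchanged, because `(g 0)⁻¹ * T = T`.
-/

open MeasureTheory Module

section ConvexHull

variable {𝕜 E : Type*} [Field 𝕜] [LinearOrder 𝕜] [IsStrictOrderedRing 𝕜] [AddCommGroup E]
  [Module 𝕜 E]

theorem exists_affineIndependent_fin_pos_sum_smul_eq_of_mem_convexHull {s : Set E} {x : E}
    (hx : x ∈ convexHull 𝕜 s) :
    ∃ (n : ℕ) (w : Fin n → 𝕜) (z : Fin n → E), AffineIndependent 𝕜 z ∧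
      (∀ i, 0 < w i) ∧ ∑ i, w i = 1 ∧ (∀ i, z i ∈ s) ∧ ∑ i, w i • z i = x := by
  obtain ⟨ι, _, z, w, hzs, hz, hw, hw1, hwz⟩ := eq_pos_convex_span_of_mem_convexHull hx
  let e := (Fintype.equivFin ι).symm
  exact ⟨Fintype.card ι, w ∘ e, z ∘ e, hz.comp_embedding e.toEmbedding, fun i => hw (e i),
    (e.sum_comp w).trans hw1, fun i => hzs ⟨e i, rfl⟩, (e.sum_comp fun j => w j • z j).trans hwz⟩

theorem convexHull_eq_biUnion_image_stdSimplex_prod [FiniteDimensional 𝕜 E] (s : Set E) :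
    convexHull 𝕜 s = ⋃ n ∈ Set.Iic (finrank 𝕜 E + 1),
      (fun q : (Fin n → 𝕜) × (Fin n → E) => ∑ i, q.1 i • q.2 i) ''
        (stdSimplex 𝕜 (Fin n) ×ˢ Set.univ.pi fun _ => s) := by
  refine Set.Subset.antisymm (fun x hx => ?_) (Set.iUnion₂_subset ?_)
  · obtain ⟨n, w, z, hind, hw, hw1, hz, hwz⟩ :=
      exists_affineIndependent_fin_pos_sum_smul_eq_of_mem_convexHull hx
    have hn : n ≤ finrank 𝕜 E + 1 := by
      simpa only [Fintype.card_fin] using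
        hind.card_le_finrank_succ.trans (Nat.succ_le_succ (Submodule.finrank_le _))
    exact Set.mem_biUnion hn ⟨(w, z), ⟨⟨fun i => (hw i).le, hw1⟩, fun i _ => hz i⟩, hwz⟩
  · rintro n - _ ⟨⟨w, z⟩, ⟨hw, hz⟩, rfl⟩
    exact mem_convexHull_of_exists_fintype w z hw.1 hw.2 (fun i => hz i trivial) rfl

end ConvexHull

theorem isCompact_convexHull_of_finiteDimensional {E : Type*} [AddCommGroup E] [Module ℝ E]
    [TopologicalSpace E] [ContinuousAdd E] [ContinuousSMul ℝ E] [FiniteDimensional ℝ E]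
    {s : Set E} (hs : IsCompact s) : IsCompact (convexHull ℝ s) := by
  rw [convexHull_eq_biUnion_image_stdSimplex_prod]
  refine (Set.finite_Iic _).isCompact_biUnion fun n _ => ?_
  exact ((isCompact_stdSimplex ℝ (Fin n)).prod (isCompact_univ_pi fun _ => hs)).image (by fun_prop)

section CompactGroupAction

variable {G E : Type*} [Group G] [TopologicalSpace G] [IsTopologicalGroup G] [CompactSpace G]
  [NormedAddCommGroup E] [NormedSpace ℝ E] [DistribMulAction G E] [SMulCommClass G ℝ E]
  [ContinuousSMul G E]

theorem exists_mem_closedConvexHull_orbit_forall_smul_eq [CompleteSpace E] (x : E) :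
    ∃ y ∈ closedConvexHull ℝ (MulAction.orbit G x), ∀ u : G, u • y = y := by
  borelize G
  let μ : Measure G := Measure.haarMeasure ⊤
  have : IsProbabilityMeasure μ := ⟨Measure.haarMeasure_self (K₀ := ⊤)⟩
  have hcont : Continuous fun g : G => g • x := by fun_prop
  have hint : Integrable (fun g : G => g • x) μ :=
    hcont.integrable_of_hasCompactSupport (.of_compactSpace _)
  refine ⟨∫ g, g • x ∂μ, ?_, fun u => ?_⟩
  · refine convex_closedConvexHull.integral_mem isClosed_closedConvexHull ?_ hint
    exact .of_forall fun g => subset_closedConvexHull (MulAction.mem_orbit x g)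
  · calc u • ∫ g, g • x ∂μ = ∫ g, u • g • x ∂μ :=
          ((ContinuousLinearEquiv.smulLeft u : E ≃L[ℝ] E).integral_comp_comm _).symm
      _ = ∫ g, (u * g) • x ∂μ := by simp only [mul_smul]
      _ = ∫ g, g • x ∂μ := integral_mul_left_eq_self (fun g => g • x) u

theorem exists_mem_convexHull_orbit_forall_smul_eq [FiniteDimensional ℝ E] (x : E) :
    ∃ y ∈ convexHull ℝ (MulAction.orbit G x), ∀ u : G, u • y = y := by
  have : CompleteSpace E := FiniteDimensional.complete ℝ E
  have horbit : IsCompact (MulAction.orbit G x) := isCompact_range (by fun_prop)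
  have hclosed : IsClosed (convexHull ℝ (MulAction.orbit G x)) :=
    (isCompact_convexHull_of_finiteDimensional horbit).isClosed
  obtain ⟨y, hy, hfix⟩ := exists_mem_closedConvexHull_orbit_forall_smul_eq (G := G) x
  exact ⟨y, closedConvexHull_min (subset_convexHull ℝ _) (convex_convexHull ℝ _) hclosed hy, hfix⟩

end CompactGroupAction

theorem exists_pos_sum_smul_smul_eq_of_mem_convexHull_orbit {𝕜 G E : Type*} [Field 𝕜]
    [LinearOrder 𝕜] [IsStrictOrderedRing 𝕜] [AddCommGroup E] [Module 𝕜 E] [Group G]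
    [DistribMulAction G E] [SMulCommClass G 𝕜 E] {x y : E}
    (hy : y ∈ convexHull 𝕜 (MulAction.orbit G x)) (hfix : ∀ u : G, u • y = y) :
    ∃ (n : ℕ) (hn : 0 < n) (p : Fin n → 𝕜) (g : Fin n → G),
      (∀ i, 0 < p i) ∧ ∑ i, p i = 1 ∧ g ⟨0, hn⟩ = 1 ∧ ∑ i, p i • g i • x = y := by
  obtain ⟨n, p, z, -, hp, hp1, hz, hpz⟩ :=
    exists_affineIndependent_fin_pos_sum_smul_eq_of_mem_convexHull hy
  choose g hg using hz
  have hn : 0 < n := by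
    refine Nat.pos_of_ne_zero ?_
    rintro rfl
    simp at hp1
  let h := g ⟨0, hn⟩
  refine ⟨n, hn, p, fun i => h⁻¹ * g i, hp, hp1, inv_mul_cancel h, ?_⟩
  calc ∑ i, p i • (h⁻¹ * g i) • x = h⁻¹ • ∑ i, p i • g i • x := by
        simp only [mul_smul, Finset.smul_sum, smul_comm h⁻¹]
    _ = h⁻¹ • y := by rw [← hpz]; simp only [← hg]
    _ = y := hfix h⁻¹

theorem compactSpace_of_isCompact_image_units_val {A : Type*} [NormedRing A]
    [HasSummableGeomSeries A] {G : Subgroup Aˣ}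
    (hG : IsCompact ((fun u : Aˣ => (u : A)) '' (G : Set Aˣ))) :
    CompactSpace G :=
  isCompact_iff_compactSpace.1 (Units.isOpenEmbedding_val.isEmbedding.isCompact_iff.2 hG)

theorem exists_twirling_test_general {A : Type*} [NormedRing A] [NormedAlgebra ℝ A]
    [FiniteDimensional ℝ A] (G : Subgroup Aˣ)
    (hcompact : IsCompact ((fun u : Aˣ => (u : A)) '' (G : Set Aˣ))) :
    ∃ (n : ℕ) (hn : 0 < n) (p : Fin n → ℝ) (g : Fin n → G),
      (∀ i, 0 < p i) ∧ ∑ i, p i = 1 ∧ g ⟨0, hn⟩ = 1 ∧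
      ∀ u ∈ G, (u : A) * ∑ i, p i • ((g i : Aˣ) : A) = ∑ i, p i • ((g i : Aˣ) : A) := by
  have : CompleteSpace A := FiniteDimensional.complete ℝ A
  have : CompactSpace G := compactSpace_of_isCompact_image_units_val hcompact
  obtain ⟨T, hT, hfix⟩ := exists_mem_convexHull_orbit_forall_smul_eq (G := G) (1 : A)
  obtain ⟨n, hn, p, g, hp, hp1, hg, hsum⟩ :=
    exists_pos_sum_smul_smul_eq_of_mem_convexHull_orbit hT hfix
  have hT_eq : ∑ i, p i • ((g i : Aˣ) : A) = T := by
    simpa only [Subgroup.smul_def, Units.smul_def, smul_eq_mul, mul_one] using hsum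
  exact ⟨n, hn, p, g, hp, hp1, hg, fun u hu => by rw [hT_eq]; exact hfix ⟨u, hu⟩⟩

/-- Existence of a twirling test: for a compact group `G` of invertible real matrices
there exists a finite convex combination `T = Σᵢ pᵢ gᵢ` of elements of `G`, with the
identity among the `gᵢ` (with strictly positive weight), such that `u * T = T` for
every `u ∈ G`. -/
theorem exists_twirling_test
    (d : ℕ) (hd : 0 < d)
    (G : Subgroup (Matrix (Fin d) (Fin d) ℝ)ˣ)
    (hcompact : IsCompact
      ((fun u : (Matrix (Fin d) (Fin d) ℝ)ˣ => (u : Matrix (Fin d) (Fin d) ℝ)) ''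
        (G : Set (Matrix (Fin d) (Fin d) ℝ)ˣ))) :
    ∃ (n : ℕ) (hn : 0 < n) (p : Fin n → ℝ) (g : Fin n → G),
      (∀ i, 0 ≤ p i) ∧ (∑ i, p i = 1) ∧ 0 < p ⟨0, hn⟩ ∧ g ⟨0, hn⟩ = 1 ∧
      ∀ u ∈ G,
        (u : Matrix (Fin d) (Fin d) ℝ) *
            (∑ i, p i • (((g i : (Matrix (Fin d) (Fin d) ℝ)ˣ)) : Matrix (Fin d) (Fin d) ℝ)) =
          ∑ i, p i • (((g i : (Matrix (Fin d) (Fin d) ℝ)ˣ)) : Matrix (Fin d) (Fin d) ℝ) := by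
  -- A submultiplicative norm whose topology is definitionally the entrywise one of `hcompact`.
  let := Matrix.linftyOpNormedRing (n := Fin d) (α := ℝ)
  let := Matrix.linftyOpNormedAlgebra (n := Fin d) (R := ℝ) (α := ℝ)
  obtain ⟨n, hn, p, g, hp, hp1, hg, hfix⟩ := exists_twirling_test_general G hcompact
  exact ⟨n, hn, p, g, fun i => (hp i).le, hp1, hp _, hg, hfix⟩
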